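/- In the semi-primitive cyclotomic setting, assume |T_0| = |T_1| = (q−1)/2 and define E_0 = {(x,xy) : x ∈ D_0, y ∈ A_0} ∪ {(x,xy) : x ∈ D_1, y ∈ A_1} ∪ {(0,x) : x ∈ D_ε}. Then E_0 is a set of type Q in F_{q²} × F_{q²}. -/

import Mathlib

/-! Write `Q = #K`, let `D₀`, `D₁` be the two halves of `Lˣ`, and let `η` be `1` on `D₀`, `-1` on
`D₁` and `0` at `0`. Each half is a union of punctured `K`-lines, and multiplication by `μ = ω ^ m`
swaps them. Hence the sums of `η` over the fibres of the trace are all equal away from the fibre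
over `0`, and they are determined by `η δ` for a `δ ≠ 0` of trace zero. The Gauss periods of `D₀`,
`D₁` at `z` therefore add up to `Q² 1_{z = 0} - 1` and differ by `Q η(δ / z)`.

Summing these periods over the two slope sets, with the same evaluation of trace sums, gives for
`b ≠ 0` that four times the character sum at `(a, b)` is
`Q² (2 · 1_{S₀ ∆ S₁} - 1 + 2 η(b⁻¹) (1_{S₀} + 1_{S₁} - 1)) - 1`, evaluated at `-a / b`, provided
that the line `x = 0` carries the half `δ D₁`. One may take
`δ = ω ^ ((q + 1) / 2) = μ ^ ((q + 1) / 2m)`, so the parity of `(q + 1) / 2m` decides which half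
`δ D₁` is. -/

noncomputable section

def zetaP (p : ℕ) : ℂ := Complex.exp (2 * Real.pi * Complex.I / p)

/-- The canonical additive character `ψ(x) = ζ_p^{Tr_{L/F_p}(x)}`. -/
def psiL (p : ℕ) (L : Type) [Field L] [Fintype L] [CharP L p] (x : L) : ℂ :=
  letI : Algebra (ZMod p) L := ZMod.algebra L p
  zetaP p ^ (Algebra.trace (ZMod p) L x).val

/-- `ψ_{a,b}(E) = Σ_{(x,y)∈E} ψ(ax+by)`. -/
def psiSum (p : ℕ) (L : Type) [Field L] [Fintype L] [CharP L p]
    (a b : L) (E : Set (L × L)) : ℂ :=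
  ∑ᶠ z ∈ E, psiL p L (a * z.1 + b * z.2)

/-- a subset of `F_{q²} × F_{q²}` of type Q. -/
def IsTypeQ (p q : ℕ) (L : Type) [Field L] [Fintype L] [CharP L p]
    (E : Set (L × L)) : Prop :=
  E.ncard = (q ^ 4 - 1) / 4 ∧
    ∀ a b : L, (a, b) ≠ ((0 : L), (0 : L)) →
      psiSum p L a b E = ((q : ℂ) ^ 2 - 1) / 4 ∨
      psiSum p L a b E = (-3 * (q : ℂ) ^ 2 - 1) / 4

/-- the cyclotomic class `C_i^{(N,q²)} = ω^i⟨ω^N⟩`. -/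
def cyc (L : Type) [Field L] (ω : L) (N i : ℕ) : Set L :=
  {x | ∃ k : ℕ, x = ω ^ i * (ω ^ N) ^ k}

/-- ω is a primitive element (generator of the multiplicative group). -/
def IsPrim (L : Type) [Field L] (ω : L) : Prop :=
  ∀ x : L, x ≠ 0 → ∃ n : ℕ, x = ω ^ n

open Module Finset
open scoped Pointwise

lemma finsum_mem_const {α R : Type*} [Finite α] [Semiring R] (s : Set α) (c : R) :
    ∑ᶠ _x ∈ s, c = s.ncard * c := by
  rw [finsum_mem_eq_finite_toFinset_sum _ s.toFinite, sum_const, nsmul_eq_mul,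
    Set.ncard_eq_toFinset_card s]

section QuadraticTrace

variable {K L : Type*} [Field K] [Field L] [Algebra K L] [Algebra.IsSeparable K L]

lemma exists_smul_eq_of_trace_eq_zero (hKL : finrank K L = 2) {δ w : L} (hδ₀ : δ ≠ 0)
    (hδ : Algebra.trace K L δ = 0) (hw : Algebra.trace K L w = 0) : ∃ c : K, c • δ = w := by
  have : FiniteDimensional K L := Module.finite_of_finrank_pos (by omega)
  have hrank := LinearMap.finrank_range_add_finrank_ker (Algebra.trace K L)
  rw [LinearMap.range_eq_top.2 (Algebra.trace_surjective K L), hKL, finrank_top,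
    finrank_self] at hrank
  have hker : finrank K (LinearMap.ker (Algebra.trace K L)) = 1 := by omega
  obtain ⟨c, hc⟩ := exists_smul_eq_of_finrank_eq_one hker
    (x := ⟨δ, hδ⟩) (by simpa [Subtype.ext_iff] using hδ₀) ⟨w, hw⟩
  exact ⟨c, congrArg Subtype.val hc⟩

lemma bijective_trace_prodMk_trace_mul (hKL : finrank K L = 2) {μ : L}
    (hμ : μ ∉ Set.range (algebraMap K L)) :
    Function.Bijective fun w ↦ (Algebra.trace K L w, Algebra.trace K L (w * μ)) := by
  have : FiniteDimensional K L := Module.finite_of_finrank_pos (by omega)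
  let f : L →ₗ[K] K × K :=
    (Algebra.trace K L).prod (Algebra.trace K L ∘ₗ LinearMap.mulRight K μ)
  have hf : Function.Injective f := by
    rw [injective_iff_map_eq_zero]
    intro w hw
    obtain ⟨hw₁, hwμ⟩ := Prod.mk.inj hw
    by_contra hw₀
    obtain ⟨c, hc⟩ := exists_smul_eq_of_trace_eq_zero hKL hw₀ hw₁ hwμ
    exact hμ ⟨c, mul_left_cancel₀ hw₀ <| by
      rw [mul_comm, ← Algebra.smul_def, hc, LinearMap.mulRight_apply]⟩
  exact ⟨hf, (LinearMap.injective_iff_surjective_of_finrank_eq_finrank (by simp [hKL])).1 hf⟩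

lemma ncard_trace_inter_trace_mul (hKL : finrank K L = 2) {μ : L}
    (hμ : μ ∉ Set.range (algebraMap K L)) (T₀ T₁ : Set K) :
    {y : L | Algebra.trace K L y ∈ T₀ ∧ Algebra.trace K L (y * μ) ∈ T₁}.ncard
      = T₀.ncard * T₁.ncard := by
  have hbij := bijective_trace_prodMk_trace_mul hKL hμ
  rw [← Set.ncard_prod, ← Set.ncard_preimage_of_injective_subset_range hbij.1
    (by simp [hbij.2.range_eq])]
  rfl

lemma ncard_trace_eq_ncard_trace_mul (hKL : finrank K L = 2) {μ : L} {T₀ T₁ : Set K}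
    (hμ : μ ∉ Set.range (algebraMap K L)) (hT : T₀.ncard = T₁.ncard) :
    {y : L | Algebra.trace K L y ∈ T₀}.ncard
      = {y : L | Algebra.trace K L (y * μ) ∈ T₁}.ncard := by
  have h₀ := ncard_trace_inter_trace_mul hKL hμ T₀ Set.univ
  have h₁ := ncard_trace_inter_trace_mul hKL hμ Set.univ T₁
  simp only [Set.mem_univ, and_true, true_and] at h₀ h₁
  rw [h₀, h₁, hT, mul_comm]

lemma ncard_symmDiff_trace [Finite L] (hKL : finrank K L = 2) {μ : L}
    (hμ : μ ∉ Set.range (algebraMap K L)) (T₀ T₁ : Set K) :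
    (symmDiff {y : L | Algebra.trace K L y ∈ T₀} {y | Algebra.trace K L (y * μ) ∈ T₁}).ncard
      = T₀.ncard * T₁ᶜ.ncard + T₀ᶜ.ncard * T₁.ncard := by
  rw [← ncard_trace_inter_trace_mul hKL hμ, ← ncard_trace_inter_trace_mul hKL hμ,
    ← Set.ncard_union_eq]
  · congr 1
    ext y
    simp only [Set.mem_symmDiff, Set.mem_union, Set.mem_ofPred_eq, Set.mem_compl_iff]
    tauto
  · rw [Set.disjoint_left]
    exact fun y hy hy' ↦ hy'.1 hy.1

end QuadraticTrace

lemma two_mul_ncard_symmDiff_trace_add_one {K L : Type*} [Field K] [Fintype K] [Field L] [Finite L]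
    [Algebra K L] (hKL : finrank K L = 2) {μ : L} {T₀ T₁ : Set K}
    (hμ : μ ∉ Set.range (algebraMap K L))
    (hT₀ : 2 * T₀.ncard + 1 = Fintype.card K) (hT₁ : 2 * T₁.ncard + 1 = Fintype.card K) :
    2 * (symmDiff {y : L | Algebra.trace K L y ∈ T₀} {y | Algebra.trace K L (y * μ) ∈ T₁}).ncard + 1
      = Fintype.card K ^ 2 := by
  have hcompl {T : Set K} (hT : 2 * T.ncard + 1 = Fintype.card K) : Tᶜ.ncard = T.ncard + 1 := by
    have hadd := Set.ncard_add_ncard_compl T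
    rw [Nat.card_eq_fintype_card] at hadd
    omega
  have hT : T₁.ncard = T₀.ncard := by omega
  rw [ncard_symmDiff_trace hKL hμ, hcompl hT₀, hcompl hT₁, hT, ← hT₀]
  ring

/-- A function `g` on an extension `L` of `K` that is constant on the punctured `K`-lines through
the origin, vanishes at `0`, and changes sign under multiplication by `μ`. -/
structure IsSemiinvariant (K : Type*) {L R : Type*} [Field K] [Field L] [Algebra K L] [Ring R]
    (μ : L) (g : L → R) : Prop where
  map_zero : g 0 = 0
  map_smul : ∀ c : K, c ≠ 0 → ∀ w, g (c • w) = g w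
  map_mul : ∀ w, g (μ * w) = -g w

namespace IsSemiinvariant

variable {K L R : Type*} [Field K] [Field L] [Algebra K L] {μ δ : L} {g : L → R}

lemma map_div [Ring R] (hg : IsSemiinvariant K μ g) (hμ : μ ≠ 0) (w : L) :
    g (w / μ) = -g w := by
  rw [← neg_eq_iff_eq_neg, ← hg.map_mul, mul_div_cancel₀ _ hμ]

lemma const_div [Ring R] (hg : IsSemiinvariant K μ g) (hμ : μ ≠ 0) (d : L) :
    IsSemiinvariant K μ fun w ↦ g (d / w) where
  map_zero := by rw [div_zero, hg.map_zero]
  map_smul c hc w := by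
    rw [← hg.map_smul c⁻¹ (inv_ne_zero hc) (d / w), Algebra.smul_def, Algebra.smul_def, map_inv₀]
    congr 1
    field_simp
  map_mul w := by rw [← hg.map_div hμ, div_div, mul_comm]

lemma div_const [Ring R] (hg : IsSemiinvariant K μ g) (z : L) :
    IsSemiinvariant K μ fun w ↦ g (w / z) where
  map_zero := by rw [zero_div, hg.map_zero]
  map_smul c hc w := by rw [smul_div_assoc, hg.map_smul c hc]
  map_mul w := by rw [mul_div_assoc, hg.map_mul]

variable [CommRing R]

lemma sum_eq_zero [Fintype L] [IsDomain R] [CharZero R] (hg : IsSemiinvariant K μ g) (hμ : μ ≠ 0) :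
    ∑ w, g w = 0 := by
  rw [← self_eq_neg, ← sum_neg_distrib, ← Equiv.sum_comp (Equiv.mulLeft₀ μ hμ) g]
  simp only [Equiv.mulLeft₀_apply, hg.map_mul]

lemma sum_trace_eq_zero [Fintype L] [Fintype K] [DecidableEq K] (hg : IsSemiinvariant K μ g)
    (hKL : finrank K L = 2) (hδ₀ : δ ≠ 0) (hδ : Algebra.trace K L δ = 0) :
    ∑ w with Algebra.trace K L w = 0, g w = (Fintype.card K - 1) * g δ := by
  classical
  have hker : univ.filter (fun w ↦ Algebra.trace K L w = 0) = univ.image (fun c : K ↦ c • δ) := by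
    ext w
    simp only [mem_filter_univ, mem_image, mem_univ, true_and]
    refine ⟨exists_smul_eq_of_trace_eq_zero hKL hδ₀ hδ, ?_⟩
    rintro ⟨c, rfl⟩
    rw [_root_.map_smul, hδ, smul_zero]
  rw [hker, sum_image (smul_left_injective K hδ₀).injOn, ← add_sum_erase univ _ (mem_univ 0),
    zero_smul, hg.map_zero, zero_add, sum_congr rfl fun c hc ↦ hg.map_smul c (ne_of_mem_erase hc) δ,
    sum_const, card_erase_of_mem (mem_univ 0), card_univ, nsmul_eq_mul,
    Nat.cast_pred Fintype.card_pos]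

lemma sum_trace_eq [Fintype L] [DecidableEq K] (hg : IsSemiinvariant K μ g) {t : K} (ht : t ≠ 0) :
    ∑ w with Algebra.trace K L w = t, g w = ∑ w with Algebra.trace K L w = 1, g w := by
  refine sum_nbij' (t⁻¹ • ·) (t • ·) ?_ ?_ ?_ ?_
    fun w _ ↦ (hg.map_smul _ (inv_ne_zero ht) w).symm <;>
    simp +contextual [ht, smul_smul]

/-- Semiinvariance makes the sums of `g` over the fibres of the trace equal away from `0`, and the
total vanishes, so all of them are determined by the sum over the kernel. -/
lemma sum_trace_eq_of_ne_zero [Fintype L] [IsDomain R] [CharZero R] [Finite K]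
    [DecidableEq K] (hg : IsSemiinvariant K μ g) (hμ : μ ≠ 0) (hKL : finrank K L = 2)
    (hδ₀ : δ ≠ 0) (hδ : Algebra.trace K L δ = 0) {t : K} (ht : t ≠ 0) :
    ∑ w with Algebra.trace K L w = t, g w = -g δ := by
  cases nonempty_fintype K
  have hcard : (Fintype.card K - 1 : R) ≠ 0 := by
    rw [sub_ne_zero, Nat.cast_ne_one]
    exact Fintype.one_lt_card.ne'
  have htotal := sum_fiberwise univ (Algebra.trace K L) g
  rw [hg.sum_eq_zero hμ, ← add_sum_erase univ _ (mem_univ 0),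
    hg.sum_trace_eq_zero hKL hδ₀ hδ, sum_congr rfl fun s hs ↦ hg.sum_trace_eq (ne_of_mem_erase hs),
    sum_const, card_erase_of_mem (mem_univ 0), card_univ, nsmul_eq_mul,
    Nat.cast_pred Fintype.card_pos, ← mul_add] at htotal
  rw [hg.sum_trace_eq ht]
  exact eq_neg_of_add_eq_zero_right ((mul_eq_zero_iff_left hcard).1 htotal)

variable [IsDomain R] [CharZero R] [Fintype K]

lemma sum_comp_trace_mul [Fintype L] (hg : IsSemiinvariant K μ g) (hμ : μ ≠ 0)
    (hKL : finrank K L = 2) (hδ₀ : δ ≠ 0) (hδ : Algebra.trace K L δ = 0) (F : K → R) :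
    ∑ w, F (Algebra.trace K L w) * g w = g δ * (Fintype.card K * F 0 - ∑ t, F t) := by
  classical
  have hfiber (t : K) : ∑ w with Algebra.trace K L w = t, F (Algebra.trace K L w) * g w
      = F t * ∑ w with Algebra.trace K L w = t, g w := by
    rw [mul_sum]
    exact sum_congr rfl fun w hw ↦ by rw [(mem_filter.1 hw).2]
  rw [← sum_fiberwise univ (Algebra.trace K L), sum_congr rfl fun t _ ↦ hfiber t,
    ← add_sum_erase univ _ (mem_univ 0), ← add_sum_erase univ F (mem_univ 0),
    hg.sum_trace_eq_zero hKL hδ₀ hδ, sum_congr rfl fun t ht ↦ by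
      rw [hg.sum_trace_eq_of_ne_zero hμ hKL hδ₀ hδ (ne_of_mem_erase ht)], ← sum_mul]
  ring

lemma finsum_mem_trace_sub [Finite L] (hg : IsSemiinvariant K μ g) (hμ : μ ≠ 0)
    (hKL : finrank K L = 2) (hδ₀ : δ ≠ 0) (hδ : Algebra.trace K L δ = 0) (T : Set K) (y₀ : L) :
    ∑ᶠ y ∈ {y : L | Algebra.trace K L y ∈ T}, g (y - y₀)
      = g δ * (Fintype.card K * T.indicator 1 (Algebra.trace K L y₀) - T.ncard) := by
  classical
  cases nonempty_fintype L
  have hsum : ∑ t, T.indicator (1 : K → R) (t + Algebra.trace K L y₀) = T.ncard := by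
    rw [← mul_one (T.ncard : R), ← finsum_mem_const, finsum_mem_def, finsum_eq_sum_of_fintype]
    exact Equiv.sum_comp (Equiv.addRight _) (T.indicator 1)
  have hshift := hg.sum_comp_trace_mul hμ hKL hδ₀ hδ
    fun t ↦ T.indicator 1 (t + Algebra.trace K L y₀)
  rw [hsum, zero_add] at hshift
  rw [← hshift, finsum_mem_def, finsum_eq_sum_of_fintype, ← Equiv.sum_comp (Equiv.addRight y₀)]
  refine sum_congr rfl fun w _ ↦ ?_
  simp [Set.indicator_apply]

lemma finsum_mem_trace_mul_sub [Finite L] (hg : IsSemiinvariant K μ g) (hμ : μ ≠ 0)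
    (hKL : finrank K L = 2) (hδ₀ : δ ≠ 0) (hδ : Algebra.trace K L δ = 0) (T : Set K) (y₀ : L) :
    ∑ᶠ y ∈ {y : L | Algebra.trace K L (y * μ) ∈ T}, g (y - y₀)
      = -(g δ * (Fintype.card K * T.indicator 1 (Algebra.trace K L (y₀ * μ)) - T.ncard)) := by
  classical
  rw [← hg.finsum_mem_trace_sub hμ hKL hδ₀ hδ, ← finsum_mem_neg_distrib _ (Set.toFinite _),
    finsum_mem_def, finsum_mem_def, ← finsum_comp_equiv (Equiv.mulRight₀ μ hμ)
      (f := Set.indicator {y : L | Algebra.trace K L y ∈ T} _)]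
  refine finsum_congr fun y ↦ ?_
  simp only [Set.indicator_apply, Set.mem_ofPred_eq, Equiv.mulRight₀_apply, ← sub_mul]
  rw [mul_comm (y - y₀), hg.map_mul, neg_neg]

lemma sum_mul_addChar_trace [Fintype L] (hg : IsSemiinvariant K μ g) (hμ : μ ≠ 0)
    (hKL : finrank K L = 2) (hδ₀ : δ ≠ 0) (hδ : Algebra.trace K L δ = 0) {ψ : AddChar K R}
    (hψ : ψ ≠ 1) (z : L) :
    ∑ x, g x * ψ (Algebra.trace K L (x * z)) = Fintype.card K * g (δ / z) := by
  obtain rfl | hz := eq_or_ne z 0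
  · simp only [mul_zero, _root_.map_zero, AddChar.map_zero_eq_one, mul_one, hg.sum_eq_zero hμ,
      div_zero, hg.map_zero]
  · have hsum := (hg.div_const z).sum_comp_trace_mul hμ hKL hδ₀ hδ ψ
    rw [AddChar.map_zero_eq_one, AddChar.sum_eq_zero_of_ne_one hψ, mul_one, sub_zero,
      ← Equiv.sum_comp (Equiv.mulRight₀ z hz)] at hsum
    rw [mul_comm _ (g _), ← hsum]
    refine sum_congr rfl fun x _ ↦ ?_
    rw [Equiv.mulRight₀_apply, mul_div_cancel_right₀ _ hz, mul_comm]

end IsSemiinvariant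

/-- `D₀` and `D₁` split `L ∖ {0}` into two halves, each a union of punctured `K`-lines, that are
interchanged by multiplication by `μ`. -/
structure IsHalving (K : Type*) {L : Type*} [Field K] [Field L] [Algebra K L] (μ : L)
    (D₀ D₁ : Set L) : Prop where
  union_eq : D₀ ∪ D₁ = {0}ᶜ
  disjoint : Disjoint D₀ D₁
  smul_mem : ∀ c : K, c ≠ 0 → ∀ x ∈ D₀, c • x ∈ D₀
  mul_mem_right : ∀ x ∈ D₀, μ * x ∈ D₁
  mul_mem_left : ∀ x ∈ D₁, μ * x ∈ D₀

/-- The sign of a splitting: `1` on `D₀`, `-1` on `D₁` and `0` elsewhere, for disjoint `D₀`, `D₁`.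
For a cyclotomic splitting it plays the role of the quadratic character. -/
def halfSign {L : Type*} (R : Type*) [Ring R] (D₀ D₁ : Set L) : L → R :=
  D₀.indicator 1 - D₁.indicator 1

/-- The Gaussian period of `D` at `z`, for the additive character `ψ ∘ trace K L` of `L`. -/
def gaussPeriod {K L R : Type*} [Field K] [Field L] [Algebra K L] [CommRing R] (ψ : AddChar K R)
    (D : Set L) (z : L) : R :=
  ∑ᶠ x ∈ D, ψ (Algebra.trace K L (x * z))

namespace IsHalving

variable {K L R : Type*} [Field K] [Field L] [Algebra K L] {μ δ z : L} {D₀ D₁ : Set L}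

lemma mem_right_iff (h : IsHalving K μ D₀ D₁) {x : L} : x ∈ D₁ ↔ x ≠ 0 ∧ x ∉ D₀ := by
  have hunion := Set.ext_iff.1 h.union_eq x
  have hdisj : x ∈ D₀ → x ∉ D₁ := fun hx ↦ h.disjoint.notMem_of_mem_left hx
  simp only [Set.mem_union, Set.mem_compl_iff, Set.mem_singleton_iff] at hunion
  tauto

lemma symm (h : IsHalving K μ D₀ D₁) : IsHalving K μ D₁ D₀ where
  union_eq := by rw [Set.union_comm, h.union_eq]
  disjoint := h.disjoint.symm
  smul_mem c hc x hx := by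
    rw [h.mem_right_iff] at hx ⊢
    refine ⟨smul_ne_zero hc hx.1, fun hcx ↦ hx.2 ?_⟩
    simpa [smul_smul, hc] using h.smul_mem c⁻¹ (inv_ne_zero hc) _ hcx
  mul_mem_right := h.mul_mem_left
  mul_mem_left := h.mul_mem_right

lemma zero_notMem_right (h : IsHalving K μ D₀ D₁) : 0 ∉ D₁ := fun h₀ ↦ (h.mem_right_iff.1 h₀).1 rfl

lemma mem_or_mem (h : IsHalving K μ D₀ D₁) (hz : z ≠ 0) : z ∈ D₀ ∨ z ∈ D₁ :=
  h.union_eq.symm.subset hz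

lemma ne_zero (h : IsHalving K μ D₀ D₁) : μ ≠ 0 := by
  rintro rfl
  obtain h₁ | h₁ := h.mem_or_mem one_ne_zero
  · exact h.zero_notMem_right (by simpa using h.mul_mem_right 1 h₁)
  · exact h.symm.zero_notMem_right (by simpa using h.mul_mem_left 1 h₁)

lemma mul_mem_right_iff (h : IsHalving K μ D₀ D₁) {x : L} : μ * x ∈ D₁ ↔ x ∈ D₀ := by
  refine ⟨fun hx ↦ ?_, h.mul_mem_right x⟩
  have hx₀ := right_ne_zero_of_mul (h.mem_right_iff.1 hx).1
  exact (h.mem_or_mem hx₀).resolve_right fun hx₁ ↦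
    h.disjoint.notMem_of_mem_left (h.mul_mem_left x hx₁) hx

lemma notMem_range_algebraMap (h : IsHalving K μ D₀ D₁) : μ ∉ Set.range (algebraMap K L) := by
  rintro ⟨c, rfl⟩
  have hc : c ≠ 0 := (map_ne_zero (algebraMap K L)).1 h.ne_zero
  have key {E₀ E₁ : Set L} (h : IsHalving K (algebraMap K L c) E₀ E₁) : 1 ∉ E₀ := fun h₁ ↦
    h.disjoint.notMem_of_mem_left (h.smul_mem c hc 1 h₁)
      (by simpa [Algebra.smul_def] using h.mul_mem_right 1 h₁)
  exact (h.mem_or_mem one_ne_zero).elim (key h) (key h.symm)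

lemma smul_right_eq (h : IsHalving K μ D₀ D₁) : μ • D₁ = D₀ := by
  ext x
  rw [Set.mem_smul_set_iff_inv_smul_mem₀ h.ne_zero, ← h.symm.mul_mem_right_iff, smul_eq_mul,
    mul_inv_cancel_left₀ h.ne_zero]

lemma pow_smul_right (h : IsHalving K μ D₀ D₁) (n : ℕ) :
    μ ^ n • D₁ = if Even n then D₁ else D₀ := by
  induction n with
  | zero => simp
  | succ n ih =>
    simp only [pow_succ', mul_smul, ih, Nat.even_add_one, ite_not]
    split_ifs
    · exact h.smul_right_eq
    · exact h.symm.smul_right_eq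

lemma isSemiinvariant [Ring R] (h : IsHalving K μ D₀ D₁) :
    IsSemiinvariant K μ (halfSign R D₀ D₁) where
  map_zero := by simp [halfSign, h.zero_notMem_right, h.symm.zero_notMem_right]
  map_smul c hc w := by
    have hsmul {E₀ E₁ : Set L} (h : IsHalving K μ E₀ E₁) : c • w ∈ E₀ ↔ w ∈ E₀ :=
      ⟨fun hw ↦ by simpa [smul_smul, hc] using h.smul_mem c⁻¹ (inv_ne_zero hc) _ hw,
        h.smul_mem c hc w⟩
    classical simp [halfSign, Set.indicator_apply, hsmul h, hsmul h.symm]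
  map_mul w := by
    classical simp [halfSign, Set.indicator_apply, h.mul_mem_right_iff, h.symm.mul_mem_right_iff]

lemma halfSign_eq_or [Ring R] (h : IsHalving K μ D₀ D₁) (hz : z ≠ 0) :
    halfSign R D₀ D₁ z = 1 ∨ halfSign R D₀ D₁ z = -1 := by
  refine (h.mem_or_mem hz).imp (fun h₀ ↦ ?_) fun h₁ ↦ ?_
  · simp [halfSign, h₀, h.disjoint.notMem_of_mem_left h₀]
  · simp [halfSign, h₁, h.disjoint.notMem_of_mem_right h₁]

variable [CommRing R] [IsDomain R] {ψ : AddChar K R}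

lemma gaussPeriod_add [Fintype K] [Finite L] (h : IsHalving K μ D₀ D₁) (hKL : finrank K L = 2)
    (hψ : ψ ≠ 1) (z : L) :
    gaussPeriod ψ D₀ z + gaussPeriod ψ D₁ z
      = Set.indicator {0} (fun _ ↦ (Fintype.card K : R) ^ 2) z - 1 := by
  cases nonempty_fintype L
  let ψL : AddChar L R := ψ.compAddMonoidHom (Algebra.trace K L).toAddMonoidHom
  have hψL : ψL ≠ 1 := by
    obtain ⟨c, hc⟩ := AddChar.ne_one_iff.1 hψ
    obtain ⟨x, rfl⟩ := Algebra.trace_surjective K L c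
    exact AddChar.ne_one_iff.2 ⟨x, hc⟩
  have hsum : ∑ x, ψL (x * z) = Set.indicator {0} (fun _ ↦ (Fintype.card K : R) ^ 2) z := by
    classical
    rw [AddChar.sum_mulShift z (AddChar.IsPrimitive.of_ne_one hψL), Set.indicator_apply,
      Module.card_eq_pow_finrank (K := K) (V := L), hKL]
    push_cast
    rfl
  have hzero : ∑ᶠ x ∈ ({0} : Set L), ψL (x * z) = 1 := by
    rw [finsum_mem_singleton, zero_mul, AddChar.map_zero_eq_one]
  rw [← hsum, ← finsum_eq_sum_of_fintype, ← finsum_mem_univ, ← Set.compl_union_self {(0 : L)},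
    finsum_mem_union disjoint_compl_left (Set.toFinite _) (Set.toFinite _), hzero,
    add_sub_cancel_right, ← h.union_eq,
    finsum_mem_union h.disjoint (Set.toFinite _) (Set.toFinite _)]
  rfl

lemma gaussPeriod_sub [CharZero R] [Fintype K] [Finite L] (h : IsHalving K μ D₀ D₁)
    (hKL : finrank K L = 2) (hδ₀ : δ ≠ 0) (hδ : Algebra.trace K L δ = 0) (hψ : ψ ≠ 1) (z : L) :
    gaussPeriod ψ D₀ z - gaussPeriod ψ D₁ z = Fintype.card K * halfSign R D₀ D₁ (δ / z) := by
  classical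
  cases nonempty_fintype L
  rw [← h.isSemiinvariant.sum_mul_addChar_trace h.ne_zero hKL hδ₀ hδ hψ, gaussPeriod, gaussPeriod,
    finsum_mem_def, finsum_mem_def, finsum_eq_sum_of_fintype, finsum_eq_sum_of_fintype,
    ← sum_sub_distrib]
  refine sum_congr rfl fun x _ ↦ ?_
  simp [halfSign, Set.indicator_apply, sub_mul]

end IsHalving

lemma gaussPeriod_smul {K L R : Type*} [Field K] [Field L] [Algebra K L] [CommRing R]
    (ψ : AddChar K R) {δ : L} (hδ : δ ≠ 0) (D : Set L) (z : L) :
    gaussPeriod ψ (δ • D) z = gaussPeriod ψ D (δ * z) := by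
  rw [gaussPeriod, ← Set.image_smul, finsum_mem_image (smul_right_injective L hδ).injOn]
  simp only [gaussPeriod, smul_eq_mul, mul_assoc, mul_left_comm]

/-- The points `(x, xy)` with `x ∈ D` and `y ∈ A`. -/
def graphSet {L : Type*} [Mul L] (D A : Set L) : Set (L × L) :=
  {w | ∃ x ∈ D, ∃ y ∈ A, w = (x, x * y)}

/-- The candidate set of type Q built from two halves `D₀`, `D₁` of `L ∖ {0}` and two sets of
slopes `S₀`, `S₁`; the points on the line `x = 0` have their second coordinate in `D`. -/
def typeQSet {L : Type*} [MulZeroClass L] (D₀ D₁ D S₀ S₁ : Set L) : Set (L × L) :=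
  graphSet D₀ (S₀ \ S₁) ∪ graphSet D₁ (S₁ \ S₀) ∪ {w | ∃ x ∈ D, w = (0, x)}

section CharacterSum

variable {L M R : Type*} [Field L]

lemma finsum_mem_prod {α β M : Type*} [Finite α] [Finite β] [AddCommMonoid M] (s : Set α)
    (t : Set β) (f : α × β → M) : ∑ᶠ w ∈ s ×ˢ t, f w = ∑ᶠ x ∈ s, ∑ᶠ y ∈ t, f (x, y) := by
  classical
  rw [finsum_mem_def, finsum_curry _ (Set.toFinite _)]
  refine finsum_congr fun x ↦ ?_
  by_cases hx : x ∈ s <;> simp [hx, finsum_mem_def, Set.indicator_apply]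

lemma finsum_mem_graphSet [Finite L] [AddCommMonoid M] {D : Set L} (hD : 0 ∉ D) (A : Set L)
    (f : L × L → M) : ∑ᶠ w ∈ graphSet D A, f w = ∑ᶠ y ∈ A, ∑ᶠ x ∈ D, f (x, x * y) := by
  have himage : graphSet D A = (fun w : L × L ↦ (w.2, w.2 * w.1)) '' A ×ˢ D := by
    ext w
    constructor
    · rintro ⟨x, hx, y, hy, rfl⟩
      exact ⟨(y, x), ⟨hy, hx⟩, rfl⟩
    · rintro ⟨⟨y, x⟩, ⟨hy, hx⟩, rfl⟩
      exact ⟨x, hx, y, hy, rfl⟩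
  have hinj : (A ×ˢ D).InjOn fun w : L × L ↦ (w.2, w.2 * w.1) := by
    rintro ⟨y, x⟩ ⟨-, hx⟩ ⟨y', x'⟩ - hxy
    obtain ⟨rfl, hxy⟩ := Prod.mk.inj hxy
    exact Prod.ext (mul_left_cancel₀ (fun hx₀ ↦ hD (hx₀ ▸ hx)) hxy) rfl
  rw [himage, finsum_mem_image hinj, finsum_mem_prod]

lemma finsum_mem_typeQSet [Finite L] [AddCommMonoid M] {D₀ D₁ : Set L} (hdisj : Disjoint D₀ D₁)
    (h₀ : 0 ∉ D₀) (h₁ : 0 ∉ D₁) (D S₀ S₁ : Set L) (f : L × L → M) :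
    ∑ᶠ w ∈ typeQSet D₀ D₁ D S₀ S₁, f w
      = ∑ᶠ y ∈ S₀ \ S₁, ∑ᶠ x ∈ D₀, f (x, x * y) + ∑ᶠ y ∈ S₁ \ S₀, ∑ᶠ x ∈ D₁, f (x, x * y)
        + ∑ᶠ x ∈ D, f (0, x) := by
  have hgraph : Disjoint (graphSet D₀ (S₀ \ S₁)) (graphSet D₁ (S₁ \ S₀)) := by
    rw [Set.disjoint_left]
    rintro _ ⟨x, hx, y, -, rfl⟩ ⟨x', hx', y', -, hxx'⟩
    exact hdisj.notMem_of_mem_left hx ((Prod.mk.inj hxx').1 ▸ hx')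
  have hline : Disjoint (graphSet D₀ (S₀ \ S₁) ∪ graphSet D₁ (S₁ \ S₀))
      {w | ∃ x ∈ D, w = (0, x)} := by
    rw [Set.disjoint_right]
    rintro _ ⟨x, -, rfl⟩ (⟨x', hx', y, -, hxx'⟩ | ⟨x', hx', y, -, hxx'⟩)
    · exact h₀ ((Prod.mk.inj hxx').1 ▸ hx')
    · exact h₁ ((Prod.mk.inj hxx').1 ▸ hx')
  have himage : {w | ∃ x ∈ D, w = ((0 : L), x)} = Prod.mk 0 '' D := by
    ext w
    simp only [Set.mem_ofPred_eq, Set.mem_image, eq_comm]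
  rw [typeQSet, finsum_mem_union hline (Set.toFinite _) (Set.toFinite _),
    finsum_mem_union hgraph (Set.toFinite _) (Set.toFinite _), finsum_mem_graphSet h₀,
    finsum_mem_graphSet h₁, himage, finsum_mem_image (Prod.mk_right_injective 0).injOn]

lemma finsum_mem_indicator_singleton_add_mul [Semiring R] (S : Set L) (c : R) (a : L) {b : L}
    (hb : b ≠ 0) :
    ∑ᶠ y ∈ S, Set.indicator {0} (fun _ ↦ c) (a + b * y) = c * S.indicator 1 (-a / b) := by
  classical
  have hroot (y : L) : a + b * y = 0 ↔ y = -a / b := by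
    rw [eq_div_iff hb, mul_comm, ← eq_neg_iff_add_eq_zero, eq_neg_iff_add_eq_zero, add_comm,
      eq_neg_iff_add_eq_zero]
  rw [finsum_mem_def, finsum_eq_single _ (-a / b) fun y hy ↦ by
    simp [Set.indicator_apply, hroot, hy]]
  simp [Set.indicator_apply, hroot]

lemma two_mul_finsum_mem_sdiff_add {α : Type*} [Finite α] [Ring R] (S₀ S₁ : Set α) (f₀ f₁ : α → R) :
    2 * (∑ᶠ y ∈ S₀ \ S₁, f₀ y + ∑ᶠ y ∈ S₁ \ S₀, f₁ y)
      = ∑ᶠ y ∈ symmDiff S₀ S₁, (f₀ y + f₁ y)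
        + (∑ᶠ y ∈ S₀, (f₀ y - f₁ y) - ∑ᶠ y ∈ S₁, (f₀ y - f₁ y)) := by
  have hsymm : ∑ᶠ y ∈ symmDiff S₀ S₁, (f₀ y + f₁ y)
      = ∑ᶠ y ∈ S₀ \ S₁, (f₀ y + f₁ y) + ∑ᶠ y ∈ S₁ \ S₀, (f₀ y + f₁ y) :=
    finsum_mem_union disjoint_sdiff_sdiff (Set.toFinite _) (Set.toFinite _)
  rw [hsymm, ← finsum_mem_inter_add_sdiff S₁ S₀.toFinite (f := fun y ↦ f₀ y - f₁ y),
    ← finsum_mem_inter_add_sdiff S₀ S₁.toFinite (f := fun y ↦ f₀ y - f₁ y), Set.inter_comm S₁ S₀]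
  simp only [finsum_mem_add_distrib (Set.toFinite (S₀ \ S₁)),
    finsum_mem_add_distrib (Set.toFinite (S₁ \ S₀)),
    finsum_mem_sub_distrib _ _ (Set.toFinite (S₀ \ S₁)),
    finsum_mem_sub_distrib _ _ (Set.toFinite (S₁ \ S₀))]
  noncomm_ring

end CharacterSum

namespace IsHalving

variable {K L R : Type*} [Field K] [Fintype K] [Field L] [Finite L] [Algebra K L]
  [CommRing R] [IsDomain R] [CharZero R] {ψ : AddChar K R} {μ δ : L} {D₀ D₁ : Set L}
  {T₀ T₁ : Set K} {S₀ S₁ : Set L}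

lemma two_mul_finsum_mem_typeQSet (h : IsHalving K μ D₀ D₁) (hKL : finrank K L = 2) (hδ₀ : δ ≠ 0)
    (hδ : Algebra.trace K L δ = 0) (hψ : ψ ≠ 1) (S₀ S₁ : Set L) (a b : L) :
    2 * ∑ᶠ w ∈ typeQSet D₀ D₁ (δ • D₁) S₀ S₁, ψ (Algebra.trace K L (a * w.1 + b * w.2))
      = ∑ᶠ y ∈ symmDiff S₀ S₁,
          (Set.indicator {0} (fun _ ↦ (Fintype.card K : R) ^ 2) (a + b * y) - 1)
        + (∑ᶠ y ∈ S₀, Fintype.card K * halfSign R D₀ D₁ (δ / (a + b * y))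
          - ∑ᶠ y ∈ S₁, Fintype.card K * halfSign R D₀ D₁ (δ / (a + b * y)))
        + (Set.indicator {0} (fun _ ↦ (Fintype.card K : R) ^ 2) b - 1
          - Fintype.card K * halfSign R D₀ D₁ b⁻¹) := by
  have hgraph (D : Set L) (y : L) : ∑ᶠ x ∈ D, ψ (Algebra.trace K L (a * x + b * (x * y)))
      = gaussPeriod ψ D (a + b * y) :=
    finsum_mem_congr rfl fun x _ ↦ by congr 2; ring
  have hline : ∑ᶠ x ∈ δ • D₁, ψ (Algebra.trace K L (a * 0 + b * x)) = gaussPeriod ψ D₁ (δ * b) := by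
    rw [← gaussPeriod_smul ψ hδ₀]
    exact finsum_mem_congr rfl fun x _ ↦ by congr 2; ring
  have hperiod : 2 * gaussPeriod ψ D₁ (δ * b)
      = Set.indicator {0} (fun _ ↦ (Fintype.card K : R) ^ 2) b - 1
        - Fintype.card K * halfSign R D₀ D₁ b⁻¹ := by
    have hadd := h.gaussPeriod_add hKL hψ (δ * b)
    have hsub := h.gaussPeriod_sub hKL hδ₀ hδ hψ (δ * b)
    have hind : Set.indicator {0} (fun _ ↦ (Fintype.card K : R) ^ 2) (δ * b)
        = Set.indicator {0} (fun _ ↦ (Fintype.card K : R) ^ 2) b := by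
      classical simp [Set.indicator_apply, hδ₀]
    rw [hind] at hadd
    rw [div_mul_cancel_left₀ hδ₀] at hsub
    linear_combination hadd - hsub
  rw [finsum_mem_typeQSet h.disjoint h.symm.zero_notMem_right h.zero_notMem_right, mul_add]
  simp only [hgraph, hline, two_mul_finsum_mem_sdiff_add, h.gaussPeriod_add hKL hψ,
    h.gaussPeriod_sub hKL hδ₀ hδ hψ, hperiod]

lemma two_mul_finsum_mem_typeQSet_zero (h : IsHalving K μ D₀ D₁) (hKL : finrank K L = 2)
    (hδ₀ : δ ≠ 0) (hδ : Algebra.trace K L δ = 0) (hψ : ψ ≠ 1)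
    (hcard : S₀.ncard = S₁.ncard) (a : L) :
    2 * ∑ᶠ w ∈ typeQSet D₀ D₁ (δ • D₁) S₀ S₁, ψ (Algebra.trace K L (a * w.1 + 0 * w.2))
      = (symmDiff S₀ S₁).ncard * (Set.indicator {0} (fun _ ↦ (Fintype.card K : R) ^ 2) a - 1)
        + (Fintype.card K ^ 2 - 1) := by
  have hη : halfSign R D₀ D₁ 0 = 0 := h.isSemiinvariant.map_zero
  rw [h.two_mul_finsum_mem_typeQSet hKL hδ₀ hδ hψ]
  simp only [zero_mul, add_zero, finsum_mem_const, hcard, sub_self, inv_zero, hη, mul_zero,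
    sub_zero, Set.indicator_of_mem (Set.mem_singleton (0 : L))]

lemma two_mul_finsum_mem_typeQSet_of_ne_zero (h : IsHalving K μ D₀ D₁) (hKL : finrank K L = 2)
    (hδ₀ : δ ≠ 0) (hδ : Algebra.trace K L δ = 0) (hψ : ψ ≠ 1)
    (hS₀ : S₀ = {y | Algebra.trace K L y ∈ T₀}) (hS₁ : S₁ = {y | Algebra.trace K L (y * μ) ∈ T₁})
    (a : L) {b : L} (hb : b ≠ 0) :
    2 * ∑ᶠ w ∈ typeQSet D₀ D₁ (δ • D₁) S₀ S₁, ψ (Algebra.trace K L (a * w.1 + b * w.2))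
      = (Fintype.card K : R) ^ 2 * (symmDiff S₀ S₁).indicator 1 (-a / b) - (symmDiff S₀ S₁).ncard
        + Fintype.card K * halfSign R D₀ D₁ b⁻¹
          * (Fintype.card K * (S₀.indicator 1 (-a / b) + S₁.indicator 1 (-a / b))
            - T₀.ncard - T₁.ncard)
        - (1 + Fintype.card K * halfSign R D₀ D₁ b⁻¹) := by
  have hzero (y : L) : a + b * y = b * (y - -a / b) := by field_simp; ring
  have hdelta : ∑ᶠ y ∈ symmDiff S₀ S₁,
      (Set.indicator {0} (fun _ ↦ (Fintype.card K : R) ^ 2) (a + b * y) - 1)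
      = (Fintype.card K : R) ^ 2 * (symmDiff S₀ S₁).indicator 1 (-a / b)
        - (symmDiff S₀ S₁).ncard := by
    rw [finsum_mem_sub_distrib _ _ (Set.toFinite _), finsum_mem_const, mul_one,
      finsum_mem_indicator_singleton_add_mul _ _ _ hb]
  have hg := h.isSemiinvariant (R := R) |>.const_div h.ne_zero (δ / b)
  have hg_apply (y : L) : halfSign R D₀ D₁ (δ / (a + b * y))
      = halfSign R D₀ D₁ (δ / b / (y - -a / b)) := by
    rw [hzero, div_mul_eq_div_div]
  have hgδ : δ / b / δ = b⁻¹ := by field_simp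
  have hS₀sum := hg.finsum_mem_trace_sub h.ne_zero hKL hδ₀ hδ T₀ (-a / b)
  have hS₁sum := hg.finsum_mem_trace_mul_sub h.ne_zero hKL hδ₀ hδ T₁ (-a / b)
  have hi₀ : T₀.indicator (1 : K → R) (Algebra.trace K L (-a / b)) = S₀.indicator 1 (-a / b) := by
    rw [hS₀]; rfl
  have hi₁ : T₁.indicator (1 : K → R) (Algebra.trace K L (-a / b * μ))
      = S₁.indicator 1 (-a / b) := by
    rw [hS₁]; rfl
  rw [hi₀, hgδ, ← hS₀] at hS₀sum
  rw [hi₁, hgδ, ← hS₁] at hS₁sum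
  rw [h.two_mul_finsum_mem_typeQSet hKL hδ₀ hδ hψ, hdelta, ← mul_finsum_mem,
    ← mul_finsum_mem, Set.indicator_of_notMem (Set.mem_singleton_iff.not.2 hb)]
  simp only [hg_apply, hS₀sum, hS₁sum]
  ring

lemma four_mul_finsum_mem_typeQSet_of_ne_zero (h : IsHalving K μ D₀ D₁) (hKL : finrank K L = 2)
    (hδ₀ : δ ≠ 0) (hδ : Algebra.trace K L δ = 0) (hψ : ψ ≠ 1)
    (hT₀ : 2 * T₀.ncard + 1 = Fintype.card K) (hT₁ : 2 * T₁.ncard + 1 = Fintype.card K)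
    (hS₀ : S₀ = {y | Algebra.trace K L y ∈ T₀}) (hS₁ : S₁ = {y | Algebra.trace K L (y * μ) ∈ T₁})
    (a : L) {b : L} (hb : b ≠ 0) :
    4 * ∑ᶠ w ∈ typeQSet D₀ D₁ (δ • D₁) S₀ S₁, ψ (Algebra.trace K L (a * w.1 + b * w.2))
      = (Fintype.card K : R) ^ 2 * (2 * (symmDiff S₀ S₁).indicator 1 (-a / b) - 1
          + 2 * halfSign R D₀ D₁ b⁻¹ * (S₀.indicator 1 (-a / b) + S₁.indicator 1 (-a / b) - 1))
        - 1 := by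
  have hsum := h.two_mul_finsum_mem_typeQSet_of_ne_zero hKL hδ₀ hδ hψ hS₀ hS₁ a hb
  have hsymm := two_mul_ncard_symmDiff_trace_add_one hKL h.notMem_range_algebraMap hT₀ hT₁
  rw [← hS₀, ← hS₁] at hsymm
  replace hsymm := congrArg (Nat.cast (R := R)) hsymm
  replace hT₀ := congrArg (Nat.cast (R := R)) hT₀
  replace hT₁ := congrArg (Nat.cast (R := R)) hT₁
  push_cast at hsymm hT₀ hT₁
  linear_combination 2 * hsum - hsymm - Fintype.card K * halfSign R D₀ D₁ b⁻¹ * (hT₀ + hT₁)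

lemma four_mul_finsum_mem_typeQSet_zero (h : IsHalving K μ D₀ D₁) (hKL : finrank K L = 2)
    (hδ₀ : δ ≠ 0) (hδ : Algebra.trace K L δ = 0) (hψ : ψ ≠ 1)
    (hT₀ : 2 * T₀.ncard + 1 = Fintype.card K) (hT₁ : 2 * T₁.ncard + 1 = Fintype.card K)
    (hS₀ : S₀ = {y | Algebra.trace K L y ∈ T₀}) (hS₁ : S₁ = {y | Algebra.trace K L (y * μ) ∈ T₁})
    (a : L) :
    4 * ∑ᶠ w ∈ typeQSet D₀ D₁ (δ • D₁) S₀ S₁, ψ (Algebra.trace K L (a * w.1 + 0 * w.2))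
      = (Fintype.card K ^ 2 - 1)
        * (Set.indicator {0} (fun _ ↦ (Fintype.card K : R) ^ 2) a + 1) := by
  have hcard : S₀.ncard = S₁.ncard := by
    rw [hS₀, hS₁]
    exact ncard_trace_eq_ncard_trace_mul hKL h.notMem_range_algebraMap (by omega)
  have hsum := h.two_mul_finsum_mem_typeQSet_zero hKL hδ₀ hδ hψ hcard a
  have hsymm := two_mul_ncard_symmDiff_trace_add_one hKL h.notMem_range_algebraMap hT₀ hT₁
  rw [← hS₀, ← hS₁] at hsymm
  replace hsymm := congrArg (Nat.cast (R := R)) hsymm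
  push_cast at hsymm
  linear_combination 2 * hsum
    + (Set.indicator {0} (fun _ ↦ (Fintype.card K : R) ^ 2) a - 1) * hsymm

end IsHalving

lemma exists_addChar_psiL_eq (p : ℕ) [hp : Fact p.Prime] (K L : Type) [Field K] [Finite K]
    [Field L] [Fintype L] [Algebra K L] [CharP L p] :
    ∃ ψ : AddChar K ℂ, ψ ≠ 1 ∧ ∀ x : L, psiL p L x = ψ (Algebra.trace K L x) := by
  have : CharP K p := (algebraMap K L).charP (algebraMap K L).injective p
  let _ : Algebra (ZMod p) L := ZMod.algebra L p
  let _ : Algebra (ZMod p) K := ZMod.algebra K p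
  have : IsScalarTower (ZMod p) K L := IsScalarTower.of_algebraMap_eq' (Subsingleton.elim _ _)
  have hζ : IsPrimitiveRoot (zetaP p) p := Complex.isPrimitiveRoot_exp p hp.out.ne_zero
  let χ : AddChar (ZMod p) ℂ := AddChar.zmodChar p hζ.pow_eq_one
  have hχ : χ 1 ≠ 1 := by
    rw [AddChar.zmodChar_apply, ZMod.val_one, pow_one]
    exact hζ.ne_one hp.out.one_lt
  refine ⟨χ.compAddMonoidHom (Algebra.trace (ZMod p) K).toAddMonoidHom, ?_, fun x ↦ ?_⟩
  · obtain ⟨k, hk⟩ := Algebra.trace_surjective (ZMod p) K 1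
    refine AddChar.ne_one_iff.2 ⟨k, ?_⟩
    change χ (Algebra.trace (ZMod p) K k) ≠ 1
    rwa [hk]
  · change χ (Algebra.trace (ZMod p) L x) = χ (Algebra.trace (ZMod p) K (Algebra.trace K L x))
    rw [Algebra.trace_trace]

theorem IsHalving.isTypeQ_typeQSet {K L : Type} [Field K] [Fintype K] [Field L] [Fintype L]
    [Algebra K L] {μ δ : L} {D₀ D₁ : Set L} {T₀ T₁ : Set K} {p : ℕ} [CharP L p]
    (h : IsHalving K μ D₀ D₁) (hKL : finrank K L = 2) (hδ₀ : δ ≠ 0)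
    (hδ : Algebra.trace K L δ = 0) (hT₀ : 2 * T₀.ncard + 1 = Fintype.card K)
    (hT₁ : 2 * T₁.ncard + 1 = Fintype.card K) :
    IsTypeQ p (Fintype.card K) L (typeQSet D₀ D₁ (δ • D₁) {y | Algebra.trace K L y ∈ T₀}
      {y | Algebra.trace K L (y * μ) ∈ T₁}) := by
  have : Fact p.Prime := ⟨CharP.char_is_prime L p⟩
  obtain ⟨ψ, hψ, hpsi⟩ := exists_addChar_psiL_eq p K L
  have hzero (a : L) := h.four_mul_finsum_mem_typeQSet_zero hKL hδ₀ hδ hψ hT₀ hT₁ rfl rfl a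
  have hne (a : L) {b : L} (hb : b ≠ 0) :=
    h.four_mul_finsum_mem_typeQSet_of_ne_zero hKL hδ₀ hδ hψ hT₀ hT₁ rfl rfl a hb
  generalize {y : L | Algebra.trace K L y ∈ T₀} = S₀ at hzero hne ⊢
  generalize {y : L | Algebra.trace K L (y * μ) ∈ T₁} = S₁ at hzero hne ⊢
  generalize typeQSet D₀ D₁ (δ • D₁) S₀ S₁ = E at hzero hne ⊢
  refine ⟨?_, fun a b hab ↦ ?_⟩
  · have hncard := hzero 0
    simp only [zero_mul, add_zero, map_zero, AddChar.map_zero_eq_one, finsum_mem_const, mul_one,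
      Set.indicator_of_mem (Set.mem_singleton (0 : L))] at hncard
    have hcard : 4 * (E.ncard : ℂ) + 1 = Fintype.card K ^ 4 := by linear_combination hncard
    norm_cast at hcard
    omega
  · simp only [psiSum, hpsi]
    obtain rfl | hb := eq_or_ne b 0
    · have ha : a ∉ ({0} : Set L) := by rintro rfl; exact hab rfl
      specialize hzero a
      rw [Set.indicator_of_notMem ha] at hzero
      exact Or.inl (by linear_combination hzero / 4)
    · specialize hne a hb
      generalize ∑ᶠ w ∈ E, ψ (Algebra.trace K L (a * w.1 + b * w.2)) = X at hne ⊢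
      by_cases h₀ : -a / b ∈ S₀ <;> by_cases h₁ : -a / b ∈ S₁ <;>
        obtain hη | hη := h.halfSign_eq_or (R := ℂ) (inv_ne_zero hb) <;>
        norm_num [Set.indicator, Set.mem_symmDiff, h₀, h₁, hη] at hne <;>
        first
        | exact Or.inl (by linear_combination hne / 4)
        | exact Or.inr (by linear_combination hne / 4)

section Cyclotomy

lemma even_pow_add_one_div_iff {m P t : ℕ} (hm : 0 < m) (hP : 2 * m ∣ P + 1)
    (hPt : 2 * m ∣ P ^ t + 1) :
    Even ((P ^ t + 1) / (2 * m)) ↔ Even ((P + 1) / (2 * m)) ∧ Odd t := by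
  have hsq : P ^ 2 ≡ 1 [MOD 2 * m * 2] := by
    obtain ⟨r, rfl⟩ : Odd P := by
      rw [← Nat.not_even_iff_odd, ← Nat.even_add_one, even_iff_two_dvd]
      exact dvd_of_mul_right_dvd hP
    have hfactor : (2 * r + 1) ^ 2 - 1 = (2 * r + 1 + 1) * 2 * r :=
      Nat.sub_eq_of_eq_add (by ring)
    refine ((Nat.modEq_iff_dvd' (Nat.one_le_pow _ _ (by omega))).2 ?_).symm
    rw [hfactor]
    exact (mul_dvd_mul_right hP 2).mul_right r
  rw [even_iff_two_dvd, even_iff_two_dvd, Nat.dvd_div_iff_mul_dvd hPt, Nat.dvd_div_iff_mul_dvd hP]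
  obtain ht | ht := Nat.even_or_odd t
  · have hpow : P ^ t ≡ 1 [MOD 2 * m * 2] := by
      obtain ⟨k, rfl⟩ := even_iff_exists_two_mul.1 ht
      simpa [pow_mul] using hsq.pow k
    rw [(hpow.add_right 1).dvd_iff dvd_rfl]
    have hnot : ¬ 2 * m * 2 ∣ 1 + 1 := fun hdvd ↦ by
      have := Nat.le_of_dvd two_pos hdvd
      omega
    exact iff_of_false hnot fun h ↦ Nat.not_odd_iff_even.2 ht h.2
  · have hpow : P ^ t ≡ P [MOD 2 * m * 2] := by
      obtain ⟨k, rfl⟩ := ht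
      simpa [pow_add, pow_mul] using (hsq.pow k).mul_right P
    rw [(hpow.add_right 1).dvd_iff dvd_rfl]
    exact (and_iff_left ht).symm

lemma add_mod_mem_iff {m : ℕ} {J : Finset ℕ} (hm : 0 < m) (hJ_lt : ∀ k ∈ J, k < 2 * m)
    (hJ_card : J.card = m) (hJ : ∀ k ∈ J, (k + m) % (2 * m) ∉ J) (n : ℕ) :
    (n + m) % (2 * m) ∈ J ↔ n % (2 * m) ∉ J := by
  have hshift {k r : ℕ} (h : k % m = r % m) :
      k % (2 * m) = r % (2 * m) ∨ k % (2 * m) = (r + m) % (2 * m) := by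
    rw [mul_comm 2 m, Nat.mod_mul, Nat.mod_mul, Nat.mod_mul, Nat.add_mod_right, h,
      Nat.add_div_right r hm]
    obtain hk | hk := Nat.mod_two_eq_zero_or_one (k / m) <;>
      obtain hr | hr := Nat.mod_two_eq_zero_or_one (r / m) <;>
      simp [hk, hr, Nat.add_mod]
  have hinj : Set.InjOn (· % m) (J : Set ℕ) := by
    intro k hk r hr hkr
    obtain h | h := hshift hkr
    · rwa [Nat.mod_eq_of_lt (hJ_lt k hk), Nat.mod_eq_of_lt (hJ_lt r hr)] at h
    · rw [Nat.mod_eq_of_lt (hJ_lt k hk)] at h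
      exact absurd (h ▸ hk) (hJ r hr)
  have hsurj := surjOn_of_injOn_of_card_le (t := range m) (· % m)
    (fun k _ ↦ mem_coe.2 (mem_range.2 (Nat.mod_lt k hm))) hinj (by simp [hJ_card])
  refine ⟨fun hn hn' ↦ hJ _ hn' (by rwa [Nat.mod_add_mod]), fun hn ↦ ?_⟩
  obtain ⟨k, hk, hkn⟩ := hsurj (mem_coe.2 (mem_range.2 (Nat.mod_lt n hm)))
  obtain h | h := hshift hkn <;> rw [Nat.mod_eq_of_lt (hJ_lt k hk)] at h
  · exact absurd (h ▸ hk) hn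
  · exact h ▸ hk

lemma exists_mem_modEq_iff {N : ℕ} {J : Finset ℕ} (hJ_lt : ∀ k ∈ J, k < N) {n : ℕ} :
    (∃ k ∈ J, n ≡ k [MOD N]) ↔ n % N ∈ J := by
  constructor
  · rintro ⟨k, hk, hnk⟩
    rwa [hnk, Nat.mod_eq_of_lt (hJ_lt k hk)]
  · exact fun hn ↦ ⟨n % N, hn, (Nat.mod_modEq n N).symm⟩

lemma modEq_add_iff_add_modEq {m n k : ℕ} : n ≡ k + m [MOD 2 * m] ↔ n + m ≡ k [MOD 2 * m] := by
  rw [← Nat.ModEq.add_iff_right (Nat.ModEq.refl m), add_assoc, ← two_mul]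
  simp [Nat.ModEq]

lemma IsPrim.isPrimitiveRoot {L : Type} [Field L] [Fintype L] {ω : L} (hω : IsPrim L ω)
    (hL : 2 < Fintype.card L) : IsPrimitiveRoot ω (Fintype.card L - 1) := by
  classical
  have hω₀ : ω ≠ 0 := by
    rintro rfl
    obtain ⟨x, -, hx⟩ := exists_mem_notMem_of_card_lt_card (s := {0, 1}) (t := (univ : Finset L))
      ((card_le_two).trans_lt (by rwa [card_univ]))
    simp only [mem_insert, mem_singleton, not_or] at hx
    obtain ⟨n, rfl⟩ := hω x hx.1
    obtain rfl | hn := eq_or_ne n 0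
    · exact hx.2 (pow_zero 0)
    · exact hx.1 (zero_pow hn)
  have hgen : ∀ x : Lˣ, x ∈ Subgroup.zpowers (Units.mk0 ω hω₀) := fun x ↦ by
    obtain ⟨n, hn⟩ := hω x x.ne_zero
    exact ⟨n, Units.ext (by simp [hn])⟩
  have hord := orderOf_eq_card_of_forall_mem_zpowers hgen
  rwa [Nat.card_eq_fintype_card, Fintype.card_units, ← IsPrimitiveRoot.iff_orderOf,
    ← IsPrimitiveRoot.coe_units_iff] at hord

lemma cyc_subset_range_pow {L : Type} [Field L] (ω : L) (N i : ℕ) :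
    cyc L ω N i ⊆ Set.range (ω ^ ·) := by
  rintro _ ⟨k, rfl⟩
  exact ⟨i + N * k, by simp only [pow_add, pow_mul]⟩

lemma pow_mem_cyc_iff {L : Type} [Field L] {ω : L} {M N : ℕ} (hω : IsPrimitiveRoot ω M)
    (hM : 0 < M) (hNM : N ∣ M) {i n : ℕ} : ω ^ n ∈ cyc L ω N i ↔ n ≡ i [MOD N] := by
  constructor
  · rintro ⟨k, hk⟩
    have hmod : n ≡ i + N * k [MOD M] := by
      lift ω to Lˣ using (hω.ne_zero hM.ne').isUnit
      rw [IsPrimitiveRoot.coe_units_iff] at hω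
      rw [hω.eq_orderOf, ← pow_eq_pow_iff_modEq, Units.ext_iff]
      simpa [pow_add, pow_mul] using hk
    simpa [Nat.ModEq] using hmod.of_dvd hNM
  · intro hni
    have hle : i ≤ n + M * i := le_add_left (Nat.le_mul_of_pos_left i hM)
    have hmod : i ≡ n + M * i [MOD N] := by
      simpa using hni.symm.add ((Nat.modEq_zero_iff_dvd.2 (hNM.mul_right i)).symm)
    obtain ⟨k, hk⟩ := (Nat.modEq_iff_dvd' hle).1 hmod
    refine ⟨k, ?_⟩
    rw [← pow_mul, ← pow_add, ← hk, Nat.add_sub_of_le hle, pow_add, pow_mul, hω.pow_eq_one,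
      one_pow, mul_one]

lemma isHalving_of_pow_mem_iff {K : Type*} {L : Type} [Field K] [Field L] [Algebra K L]
    {ω : L} {m : ℕ} (hω₀ : ω ≠ 0) (hω : IsPrim L ω) {D₀ D₁ : Set L}
    (hD : D₀ ∪ D₁ ⊆ Set.range (ω ^ ·)) {I : Set ℕ}
    (hD₀ : ∀ n, ω ^ n ∈ D₀ ↔ n ∈ I) (hD₁ : ∀ n, ω ^ n ∈ D₁ ↔ n ∉ I)
    (hI : ∀ n, m + n ∈ I ↔ n ∉ I)
    (hIK : ∀ c : K, c ≠ 0 → ∀ k, algebraMap K L c = ω ^ k → ∀ n, k + n ∈ I ↔ n ∈ I) :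
    IsHalving K (ω ^ m) D₀ D₁ where
  union_eq := by
    ext x
    refine ⟨fun hx ↦ ?_, fun hx ↦ ?_⟩
    · obtain ⟨n, rfl⟩ := hD hx
      exact pow_ne_zero n hω₀
    · obtain ⟨n, rfl⟩ := hω x hx
      rw [Set.mem_union, hD₀, hD₁]
      exact em _
  disjoint := Set.disjoint_left.2 fun x hx₀ hx₁ ↦ by
    obtain ⟨n, rfl⟩ := hD (Or.inl hx₀)
    exact (hD₁ n).1 hx₁ ((hD₀ n).1 hx₀)
  smul_mem c hc x hx := by
    obtain ⟨n, rfl⟩ := hD (Or.inl hx)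
    obtain ⟨k, hk⟩ := hω (algebraMap K L c) (by simpa using hc)
    simpa only [Algebra.smul_def, hk, ← pow_add, hD₀, hIK c hc k hk] using hx
  mul_mem_right x hx := by
    obtain ⟨n, rfl⟩ := hD (Or.inl hx)
    simpa only [← pow_add, hD₀, hD₁, hI, not_not] using hx
  mul_mem_left x hx := by
    obtain ⟨n, rfl⟩ := hD (Or.inr hx)
    simpa only [← pow_add, hD₀, hD₁, hI] using hx

variable {K L : Type} [Field K] [Fintype K] [Field L] [Algebra K L] {ω : L} {m : ℕ}

lemma card_add_one_dvd_of_algebraMap_eq_pow (hω : IsPrimitiveRoot ω (Fintype.card K ^ 2 - 1))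
    {c : K} (hc : c ≠ 0) {k : ℕ} (hk : algebraMap K L c = ω ^ k) : Fintype.card K + 1 ∣ k := by
  have hpow : ω ^ (k * (Fintype.card K - 1)) = 1 := by
    rw [pow_mul, ← hk, ← map_pow, FiniteField.pow_card_sub_one_eq_one c hc, map_one]
  have hdvd := hω.dvd_of_pow_eq_one _ hpow
  rw [Nat.sq_sub_sq _ 1] at hdvd
  exact Nat.dvd_of_mul_dvd_mul_right (Nat.sub_pos_of_lt Fintype.one_lt_card) hdvd

lemma trace_pow_eq_zero [Finite L] (hKL : finrank K L = 2)
    (hω : IsPrimitiveRoot ω (Fintype.card K ^ 2 - 1)) {k : ℕ} (hk : k * 2 = Fintype.card K + 1) :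
    Algebra.trace K L (ω ^ k) = 0 := by
  have hcard : Fintype.card K ^ 2 - 1 = k * (Fintype.card K - 1) * 2 := by
    rw [Nat.sq_sub_sq _ 1, ← hk]
    ring
  have hpos : 0 < Fintype.card K ^ 2 - 1 :=
    Nat.sub_pos_of_lt (Nat.one_lt_pow two_ne_zero Fintype.one_lt_card)
  have hneg : (ω ^ k) ^ (Fintype.card K - 1) = -1 := by
    rw [← pow_mul]
    exact (hω.pow hpos hcard).eq_neg_one_of_two_right
  apply (algebraMap K L).injective
  rw [FiniteField.algebraMap_trace_eq_sum_pow, hKL, Nat.card_eq_fintype_card, sum_range_succ,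
    sum_range_one, pow_zero, pow_one, pow_one, ← pow_sub_one_mul Fintype.card_ne_zero, hneg,
    map_zero, neg_one_mul, add_neg_cancel]

lemma isHalving_iUnion_cyc [Finite L] (hKL : finrank K L = 2) (hω : IsPrim L ω) (hm : 0 < m)
    (hdvd : 2 * m ∣ Fintype.card K + 1) {J : Finset ℕ} (hJ_lt : ∀ k ∈ J, k < 2 * m)
    (hJ_card : J.card = m) (hJ : ∀ k ∈ J, (k + m) % (2 * m) ∉ J) :
    IsHalving K (ω ^ m) (⋃ i ∈ J, cyc L ω (2 * m) i) (⋃ i ∈ J, cyc L ω (2 * m) (i + m)) := by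
  cases nonempty_fintype L
  have hcard : Fintype.card L = Fintype.card K ^ 2 := by
    rw [Module.card_eq_pow_finrank (K := K) (V := L), hKL]
  have hK : 1 < Fintype.card K := Fintype.one_lt_card
  have hprim := hω.isPrimitiveRoot (by rw [hcard]; nlinarith)
  rw [hcard] at hprim
  have hpos : 0 < Fintype.card K ^ 2 - 1 := Nat.sub_pos_of_lt (Nat.one_lt_pow two_ne_zero hK)
  have hdvd' : 2 * m ∣ Fintype.card K ^ 2 - 1 := by
    rw [Nat.sq_sub_sq _ 1]
    exact hdvd.mul_right _
  have hmem₀ (n : ℕ) : ω ^ n ∈ ⋃ i ∈ J, cyc L ω (2 * m) i ↔ n % (2 * m) ∈ J := by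
    simp only [Set.mem_iUnion, pow_mem_cyc_iff hprim hpos hdvd', exists_prop,
      exists_mem_modEq_iff hJ_lt]
  have hmem₁ (n : ℕ) : ω ^ n ∈ ⋃ i ∈ J, cyc L ω (2 * m) (i + m) ↔ n % (2 * m) ∉ J := by
    simp only [Set.mem_iUnion, pow_mem_cyc_iff hprim hpos hdvd', exists_prop,
      modEq_add_iff_add_modEq, exists_mem_modEq_iff hJ_lt, add_mod_mem_iff hm hJ_lt hJ_card hJ]
  refine isHalving_of_pow_mem_iff (I := {n | n % (2 * m) ∈ J}) (hprim.ne_zero hpos.ne') hω ?_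
    hmem₀ hmem₁ (fun n ↦ ?_) fun c hc k hk n ↦ ?_
  · exact Set.union_subset (Set.iUnion₂_subset fun i _ ↦ cyc_subset_range_pow _ _ _)
      (Set.iUnion₂_subset fun i _ ↦ cyc_subset_range_pow _ _ _)
  · rw [add_comm m]
    exact add_mod_mem_iff hm hJ_lt hJ_card hJ n
  · have hmk := hdvd.trans (card_add_one_dvd_of_algebraMap_eq_pow hprim hc hk)
    rw [Set.mem_ofPred_eq, Set.mem_ofPred_eq, ← Nat.mod_add_mod, Nat.mod_eq_zero_of_dvd hmk,
      zero_add]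

end Cyclotomy

theorem semiprimitive_E0_typeQ_general {p q m : ℕ} (hm : 0 < m) (hdvd : 2 * m ∣ q + 1)
    {K L : Type} [Field K] [Fintype K] [Field L] [Fintype L] [Algebra K L] [CharP L p]
    (hK : Fintype.card K = q) (hL : Fintype.card L = q ^ 2) {ω : L} (hω : IsPrim L ω)
    {J : Finset ℕ} (hJ_lt : ∀ k ∈ J, k < 2 * m) (hJ_card : J.card = m)
    (hJ : ∀ k ∈ J, (k + m) % (2 * m) ∉ J) {D₀ D₁ : Set L}
    (hD₀ : D₀ = ⋃ i ∈ J, cyc L ω (2 * m) i) (hD₁ : D₁ = ⋃ i ∈ J, cyc L ω (2 * m) (i + m))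
    {T₀ T₁ : Set K} (hT₀ : T₀.ncard = (q - 1) / 2) (hT₁ : T₁.ncard = (q - 1) / 2) :
    IsTypeQ p q L (typeQSet D₀ D₁ (if Even ((q + 1) / (2 * m)) then D₁ else D₀)
      {y | Algebra.trace K L y ∈ T₀} {y | Algebra.trace K L (y * ω ^ m) ∈ T₁}) := by
  subst hK hD₀ hD₁
  have hK : 1 < Fintype.card K := Fintype.one_lt_card
  have hKL : finrank K L = 2 :=
    Nat.pow_right_injective hK (Module.card_eq_pow_finrank.symm.trans hL)
  have hhalving := isHalving_iUnion_cyc hKL hω hm hdvd hJ_lt hJ_card hJ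
  have hprim := hω.isPrimitiveRoot (hL ▸ by nlinarith)
  rw [hL] at hprim
  have hexp : m * ((Fintype.card K + 1) / (2 * m)) * 2 = Fintype.card K + 1 := by
    rw [mul_right_comm, mul_comm m 2, Nat.mul_div_cancel' hdvd]
  have htrace := trace_pow_eq_zero hKL hprim hexp
  rw [pow_mul] at htrace
  rw [← hhalving.pow_smul_right]
  exact hhalving.isTypeQ_typeQSet hKL (pow_ne_zero _ hhalving.ne_zero) htrace
    (by omega) (by omega)

/-- Theorem 3.2(1): if `|T₀| = |T₁| = (q−1)/2` then `E₀` is of type Q. -/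
theorem semiprimitive_E0_typeQ
    (p s q m l t : ℕ) (hp : p.Prime) (hpodd : p ≠ 2) (hs : 0 < s) (hq : q = p ^ s)
    (hm : 0 < m) (hdvd : 2 * m ∣ q + 1)
    (hl : 0 < l) (hldvd : 2 * m ∣ p ^ l + 1)
    (hlmin : ∀ l', 0 < l' → 2 * m ∣ p ^ l' + 1 → l ≤ l')
    (ht : s = l * t)
    (K L : Type) [Field K] [Fintype K] [Field L] [Fintype L] [Algebra K L] [CharP L p]
    (hK : Fintype.card K = q) (hL : Fintype.card L = q ^ 2)
    (ω : L) (hω : IsPrim L ω)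
    (Kst : Finset ℕ) (hKsub : ∀ k ∈ Kst, k < 2 * m) (hKcard : Kst.card = m)
    (hKdisj : ∀ k ∈ Kst, (k + m) % (2 * m) ∉ Kst)
    (D₀ D₁ : Set L)
    (hD₀ : D₀ = ⋃ i ∈ Kst, cyc L ω (2 * m) i)
    (hD₁ : D₁ = ⋃ i ∈ Kst, cyc L ω (2 * m) (i + m))
    (T₀ T₁ : Set K)
    (S₀ S₁ : Set L)
    (hS₀ : S₀ = {x : L | Algebra.trace K L x ∈ T₀})
    (hS₁ : S₁ = {x : L | Algebra.trace K L (x * ω ^ m) ∈ T₁})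
    (ε : ℕ) (hε : ε = if Even ((p ^ l + 1) / (2 * m)) ∧ Odd t then 1 else 0)
    (Dε : Set L) (hDε : Dε = if ε = 0 then D₀ else D₁)
    (A₀ A₁ : Set L) (hA₀ : A₀ = S₀ \ S₁) (hA₁ : A₁ = S₁ \ S₀)
    (hT₀ : T₀.ncard = (q - 1) / 2) (hT₁ : T₁.ncard = (q - 1) / 2)
    (E₀ : Set (L × L))
    (hE₀ : E₀ = {w | ∃ x ∈ D₀, ∃ y ∈ A₀, w = (x, x * y)} ∪
      {w | ∃ x ∈ D₁, ∃ y ∈ A₁, w = (x, x * y)} ∪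
      {w | ∃ x ∈ Dε, w = ((0 : L), x)})
    : IsTypeQ p q L E₀ := by
  have hDε' : Dε = if Even ((q + 1) / (2 * m)) then D₁ else D₀ := by
    rw [hq, ht, pow_mul] at hdvd ⊢
    simp only [hDε, hε, even_pow_add_one_div_iff hm hldvd hdvd]
    split_ifs <;> trivial
  subst hS₀ hS₁ hA₀ hA₁ hE₀ hDε'
  exact semiprimitive_E0_typeQ_general hm hdvd hK hL hω hKsub hKcard hKdisj hD₀ hD₁ hT₀ hT₁

end
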